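/- For all positive integers i and k it holds that W_{i,k+1} = ⌊ φ W_{i,k} + φ^{−1} ⌋. -/

import Mathlib

open Real

noncomputable def phi : ℝ := (1 + Real.sqrt 5) / 2

noncomputable def W (i : ℕ) : ℕ → ℤ
  | 0 => ⌊phi ^ 2 * (⌊phi * i⌋ : ℝ)⌋ - ⌊phi * (⌊phi * i⌋ : ℝ)⌋
  | 1 => ⌊phi * (⌊phi * i⌋ : ℝ)⌋
  | 2 => ⌊phi ^ 2 * (⌊phi * i⌋ : ℝ)⌋
  | (k + 3) => W i (k + 2) + W i (k + 1)

noncomputable def wplus (i : ℕ) : ℝ := phi⁻¹ ^ 2 * (W i 1 : ℝ) + phi⁻¹ * (W i 2 : ℝ)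

noncomputable def wminus (i : ℕ) : ℝ := phi ^ 2 * (W i 1 : ℝ) - phi * (W i 2 : ℝ)

noncomputable def eta (i : ℕ) : ℝ := -(wplus i * wminus i)

/-!
Multiplication by the conjugate `ψ = 1 - φ` carries each error `u (k + 1) - φ * u k` of a sequence
with the Fibonacci recurrence to the next one. Extended one column to the left, a row of the
Wythoff array starts with an integer `m` followed by `⌊φ * m⌋`, so its errors are
`-ψ ^ k * fract (φ * m)`. The bounds `ψ ≤ ψ ^ k ≤ ψ ^ 2 = 1 + ψ` for `1 ≤ k` then place
`φ * u k + φ⁻¹ - u (k + 1) = ψ ^ k * fract (φ * m) - ψ` in `[0, 1)`.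
-/

section CommRing

variable {R : Type*} [CommRing R]

theorem succ_sub_mul_eq_pow_mul_of_recurrence {u : ℕ → R} {a b : R}
    (hu : ∀ n, u (n + 2) = (a + b) * u (n + 1) - a * b * u n) (n : ℕ) :
    u (n + 1) - a * u n = b ^ n * (u 1 - a * u 0) := by
  induction n with
  | zero => simp
  | succ n ih => linear_combination hu n + b * ih

variable [LinearOrder R] [IsStrictOrderedRing R] {x : R} {n : ℕ}

theorem self_le_pow_of_nonpos (hx : -1 ≤ x) (hx₀ : x ≤ 0) (hn : n ≠ 0) : x ≤ x ^ n := by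
  have habs : |x| ≤ 1 := abs_le.mpr ⟨hx, hx₀.trans zero_le_one⟩
  calc x = -|x| := by rw [abs_of_nonpos hx₀, neg_neg]
    _ ≤ -|x ^ n| := by
      rw [abs_pow]
      exact neg_le_neg (pow_le_of_le_one (abs_nonneg x) habs hn)
    _ ≤ x ^ n := neg_abs_le _

theorem pow_le_sq_of_nonpos (hx : -1 ≤ x) (hx₀ : x ≤ 0) (hn : n ≠ 0) : x ^ n ≤ x ^ 2 := by
  have habs : |x| ≤ 1 := abs_le.mpr ⟨hx, hx₀.trans zero_le_one⟩
  obtain rfl | hn₂ : n = 1 ∨ 2 ≤ n := by omega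
  · simpa only [pow_one] using hx₀.trans (sq_nonneg x)
  · calc x ^ n ≤ |x| ^ n := (le_abs_self _).trans_eq (abs_pow x n)
      _ ≤ |x| ^ 2 := pow_le_pow_of_le_one (abs_nonneg x) habs hn₂
      _ = x ^ 2 := sq_abs x

end CommRing

section FibonacciRecurrence

open scoped goldenRatio

theorem succ_sub_goldenRatio_mul_eq {u : ℕ → ℤ} (h₁ : u 1 = ⌊φ * u 0⌋)
    (hu : ∀ n, u (n + 2) = u (n + 1) + u n) (n : ℕ) :
    u (n + 1) - φ * u n = -(ψ ^ n * Int.fract (φ * u 0)) := by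
  have hrec : ∀ n, (u (n + 2) : ℝ) = (φ + ψ) * u (n + 1) - φ * ψ * u n := fun n ↦ by
    rw [goldenRatio_add_goldenConj, goldenRatio_mul_goldenConj, hu]
    push_cast
    ring
  calc
    (u (n + 1) - φ * u n : ℝ) = ψ ^ n * (u 1 - φ * u 0) :=
      succ_sub_mul_eq_pow_mul_of_recurrence (u := fun n ↦ (u n : ℝ)) hrec n
    _ = -(ψ ^ n * Int.fract (φ * u 0)) := by
      rw [h₁, ← Int.self_sub_floor]
      ring

theorem wythoff_succ_floor_general {u : ℕ → ℤ} (h₁ : u 1 = ⌊φ * u 0⌋)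
    (hu : ∀ n, u (n + 2) = u (n + 1) + u n) {k : ℕ} (hk : k ≠ 0) :
    u (k + 1) = ⌊φ * u k + φ⁻¹⌋ := by
  have herror := succ_sub_goldenRatio_mul_eq h₁ hu k
  set f := Int.fract (φ * u 0)
  have hf₀ : 0 ≤ f := Int.fract_nonneg _
  have hf₁ : f < 1 := Int.fract_lt_one _
  have hlower : ψ ≤ ψ ^ k * f :=
    calc
      ψ ≤ ψ * f := le_mul_of_le_one_right goldenConj_neg.le hf₁.le
      _ ≤ ψ ^ k * f := mul_le_mul_of_nonneg_right
        (self_le_pow_of_nonpos neg_one_lt_goldenConj.le goldenConj_neg.le hk) hf₀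
  have hupper : ψ ^ k * f < ψ + 1 :=
    calc
      ψ ^ k * f ≤ ψ ^ 2 * f := mul_le_mul_of_nonneg_right
        (pow_le_sq_of_nonpos neg_one_lt_goldenConj.le goldenConj_neg.le hk) hf₀
      _ < ψ ^ 2 := mul_lt_of_lt_one_right (sq_pos_of_neg goldenConj_neg) hf₁
      _ = ψ + 1 := goldenConj_sq
  rw [eq_comm, Int.floor_eq_iff, inv_goldenRatio]
  constructor <;> linarith

end FibonacciRecurrence

theorem phi_eq_goldenRatio : phi = goldenRatio := rfl

theorem floor_phi_sq_mul_intCast (m : ℤ) : ⌊phi ^ 2 * m⌋ = ⌊phi * m⌋ + m := by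
  rw [phi_eq_goldenRatio, goldenRatio_sq, add_one_mul, Int.floor_add_intCast]

theorem W_zero (i : ℕ) : W i 0 = ⌊phi * i⌋ := by
  rw [W, floor_phi_sq_mul_intCast, add_sub_cancel_left]

theorem W_one (i : ℕ) : W i 1 = ⌊phi * W i 0⌋ := by
  rw [W_zero, W]

theorem W_add_two (i : ℕ) : ∀ k, W i (k + 2) = W i (k + 1) + W i k
  | 0 => by rw [W_one, W_zero, W, floor_phi_sq_mul_intCast]
  | k + 1 => by rw [W]

/-- Successor formula in the rows of the Wythoff array: `W_{i,k+1} = ⌊φ W_{i,k} + φ⁻¹⌋`. -/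
theorem wythoff_succ_floor (i k : ℕ) (hi : 0 < i) (hk : 0 < k) :
    W i (k + 1) = ⌊phi * (W i k : ℝ) + phi⁻¹⌋ :=
  wythoff_succ_floor_general (W_one i) (W_add_two i) hk.ne'
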